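/- Let d ≥ 1, q, y ∈ ℝᵈ, h > 0, κ a positive integer, n₁, …, n_κ ∈ ℝᵈ unit vectors, and τ₁, …, τ_κ > 0 with ϑ_κ ≤ h, and suppose ⟨n_i, Y_{i−1}⟩ ≥ 0 for i = 1, …, κ. Then the endpoint Q = q + Σ_{i=1}^{κ} τ_i Y_{i−1} + (h − ϑ_κ) Y_κ of the multi-collision step satisfies |Q − q| ≤ h |y| + 2 Σ_{i=1}^{κ} (h − ϑ_i) ⟨n_i, Y_{i−1}⟩. -/

import Mathlib

open scoped RealInnerProductSpace

/-!
A specular reflection is an isometry, so every leg of the step is traversed at the same speed `|y|`.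
The legs take total time `h`, hence the step moves the position by at most `h |y|`. The collision
term only adds a nonnegative quantity to this sharper bound.
-/

theorem norm_sum_smul_le_sum_mul {ι E : Type*} [SeminormedAddCommGroup E] [NormedSpace ℝ E]
    {s : Finset ι} {w : ι → ℝ} {v : ι → E} {C : ℝ}
    (hw : ∀ i ∈ s, 0 ≤ w i) (hv : ∀ i ∈ s, ‖v i‖ ≤ C) :
    ‖∑ i ∈ s, w i • v i‖ ≤ (∑ i ∈ s, w i) * C := by
  rw [Finset.sum_mul]
  refine norm_sum_le_of_le s fun i hi => ?_
  rw [norm_smul, Real.norm_of_nonneg (hw i hi)]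
  exact mul_le_mul_of_nonneg_left (hv i hi) (hw i hi)

theorem norm_sum_smul_add_sub_smul_le {ι E : Type*} [SeminormedAddCommGroup E] [NormedSpace ℝ E]
    {s : Finset ι} {τ : ι → ℝ} {v : ι → E} {v' : E} {h C : ℝ}
    (hτ : ∀ i ∈ s, 0 ≤ τ i) (hτh : ∑ i ∈ s, τ i ≤ h)
    (hv : ∀ i ∈ s, ‖v i‖ ≤ C) (hv' : ‖v'‖ ≤ C) :
    ‖∑ i ∈ s, τ i • v i + (h - ∑ i ∈ s, τ i) • v'‖ ≤ h * C := by
  have hrest : 0 ≤ h - ∑ i ∈ s, τ i := sub_nonneg.2 hτh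
  calc ‖∑ i ∈ s, τ i • v i + (h - ∑ i ∈ s, τ i) • v'‖
      ≤ ‖∑ i ∈ s, τ i • v i‖ + ‖(h - ∑ i ∈ s, τ i) • v'‖ := norm_add_le _ _
    _ ≤ (∑ i ∈ s, τ i) * C + (h - ∑ i ∈ s, τ i) * C := by
      rw [norm_smul, Real.norm_of_nonneg hrest]
      gcongr
      exact norm_sum_smul_le_sum_mul hτ hv
    _ = h * C := by ring

theorem sum_sub_sum_range_succ_mul_nonneg {R : Type*} [Ring R] [PartialOrder R] [IsOrderedRing R]
    {κ : ℕ} {τ a : ℕ → R} {h : R}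
    (hτ : ∀ i < κ, 0 ≤ τ i) (hτh : ∑ j ∈ Finset.range κ, τ j ≤ h) (ha : ∀ i < κ, 0 ≤ a i) :
    0 ≤ ∑ i ∈ Finset.range κ, (h - ∑ j ∈ Finset.range (i + 1), τ j) * a i := by
  refine Finset.sum_nonneg fun i hi => ?_
  have hiκ : i < κ := Finset.mem_range.1 hi
  have hpartial : ∑ j ∈ Finset.range (i + 1), τ j ≤ ∑ j ∈ Finset.range κ, τ j :=
    Finset.sum_le_sum_of_subset_of_nonneg (Finset.range_subset_range.2 hiκ)
      fun j hj _ => hτ j (Finset.mem_range.1 hj)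
  exact mul_nonneg (sub_nonneg.2 (hpartial.trans hτh)) (ha i hiκ)

section Reflection

variable {E : Type*} [NormedAddCommGroup E] [InnerProductSpace ℝ E]

theorem reflection_orthogonal_singleton_apply_of_norm_eq_one {n : E} (hn : ‖n‖ = 1) (x : E) :
    (ℝ ∙ n)ᗮ.reflection x = x - (2 * ⟪n, x⟫) • n := by
  rw [Submodule.reflection_orthogonal_apply, Submodule.reflection_singleton_apply, hn]
  simp [mul_smul, ofNat_smul_eq_nsmul]

theorem norm_eq_norm_zero_of_reflections {κ : ℕ} {n Y : ℕ → E} (hn : ∀ i < κ, ‖n i‖ = 1)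
    (hY : ∀ i < κ, Y (i + 1) = Y i - (2 * ⟪n i, Y i⟫) • n i) {i : ℕ} (hi : i ≤ κ) :
    ‖Y i‖ = ‖Y 0‖ := by
  induction i with
  | zero => rfl
  | succ i ih =>
    rw [hY i hi, ← reflection_orthogonal_singleton_apply_of_norm_eq_one (hn i hi),
      LinearIsometryEquiv.norm_map, ih (Nat.le_of_succ_le hi)]

theorem stmt10_general (q y : E) (h : ℝ) (κ : ℕ)
    (n : ℕ → E) (hn : ∀ i < κ, ‖n i‖ = 1)
    (τ : ℕ → ℝ) (hτ : ∀ i < κ, 0 ≤ τ i)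
    (ϑ : ℕ → ℝ) (hϑ : ∀ k, ϑ k = ∑ j ∈ Finset.range k, τ j)
    (hϑκ : ϑ κ ≤ h)
    (Y : ℕ → E) (hY0 : Y 0 = y)
    (hY : ∀ i < κ, Y (i + 1) = Y i - (2 * ⟪n i, Y i⟫) • n i) :
    ‖(q + ∑ i ∈ Finset.range κ, τ i • Y i + (h - ϑ κ) • Y κ) - q‖ ≤ h * ‖y‖ := by
  have hspeed : ∀ i ≤ κ, ‖Y i‖ ≤ ‖y‖ := fun i hi =>
    hY0 ▸ (norm_eq_norm_zero_of_reflections hn hY hi).le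
  rw [add_assoc, add_sub_cancel_left, hϑ κ]
  exact norm_sum_smul_add_sub_smul_le (fun i hi => hτ i (Finset.mem_range.1 hi)) (hϑ κ ▸ hϑκ)
    (fun i hi => hspeed i (Finset.mem_range.1 hi).le) (hspeed κ le_rfl)

end Reflection

/-- Bound on the displacement of the multi-collision step: if `Y₀ = y`,
`Y_i = Y_{i−1} − 2⟨n_i, Y_{i−1}⟩ n_i` for unit vectors `n_i` with `⟨n_i, Y_{i−1}⟩ ≥ 0`,
collision times `τ_i > 0` with `ϑ_κ ≤ h`, then the endpoint
`Q = q + Σ τ_i Y_{i−1} + (h − ϑ_κ) Y_κ` satisfies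
`|Q − q| ≤ h |y| + 2 Σ (h − ϑ_i) ⟨n_i, Y_{i−1}⟩`.
(Indices are shifted: `n i`, `τ i` for `i = 0, …, κ−1` stand for `n_{i+1}`, `τ_{i+1}`.) -/
theorem stmt10 (d : ℕ) (hd : 1 ≤ d)
    (q y : EuclideanSpace ℝ (Fin d)) (h : ℝ) (hh : 0 < h)
    (κ : ℕ) (hκ : 1 ≤ κ)
    (n : ℕ → EuclideanSpace ℝ (Fin d)) (hn : ∀ i < κ, ‖n i‖ = 1)
    (τ : ℕ → ℝ) (hτ : ∀ i < κ, 0 < τ i)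
    (ϑ : ℕ → ℝ) (hϑ : ∀ k, ϑ k = ∑ j ∈ Finset.range k, τ j)
    (hϑκ : ϑ κ ≤ h)
    (Y : ℕ → EuclideanSpace ℝ (Fin d)) (hY0 : Y 0 = y)
    (hY : ∀ i < κ, Y (i + 1) = Y i - (2 * ⟪n i, Y i⟫) • n i)
    (hpos : ∀ i < κ, 0 ≤ ⟪n i, Y i⟫) :
    ‖(q + ∑ i ∈ Finset.range κ, τ i • Y i + (h - ϑ κ) • Y κ) - q‖
      ≤ h * ‖y‖ + 2 * ∑ i ∈ Finset.range κ, (h - ϑ (i + 1)) * ⟪n i, Y i⟫ := by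
  have hτ' : ∀ i < κ, 0 ≤ τ i := fun i hi => (hτ i hi).le
  refine (stmt10_general q y h κ n hn τ hτ' ϑ hϑ hϑκ Y hY0 hY).trans
    (le_add_of_nonneg_right (mul_nonneg zero_le_two ?_))
  simpa only [hϑ] using sum_sub_sum_range_succ_mul_nonneg hτ' (hϑ κ ▸ hϑκ) hpos
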